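/- Let (X,d,μ) be a metric measure space with X locally compact and separable and μ Borel regular with 0 < μ(B) < ∞ for all balls B. Let 𝓜 be the set of Borel measures ν with compact support satisfying 0 ≤ ν ≤ μ, with metric d_𝓜 defined via mass-transport decompositions using a gauge function h (strictly increasing, continuous, h(0)=0, lim_{ε→0⁺} h(ε)/ε = 0, superadditive, h(ε)→∞). Then d_𝓜 is a metric on 𝓜. -/

import Mathlib

open MeasureTheory Set Filter
open scoped ENNReal Classical

variable {X : Type*} [MetricSpace X] [MeasurableSpace X]

/-- Total mass of a measure, as a real number. -/
noncomputable def mass (ν : Measure X) : ℝ := (ν Set.univ).toReal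

/-- The support of a measure. -/
def msupp (ν : Measure X) : Set X := {x : X | ∀ ε : ℝ, 0 < ε → 0 < ν (Metric.ball x ε)}

/-- The set `𝓜` of measures dominated by `μ` with compact support. -/
def MM (μ : Measure X) : Set (Measure X) := {ν | ν ≤ μ ∧ IsCompact (msupp ν)}

/-- Gauge function `h` used in the definition of the mass transport metric. -/
def IsGauge (h : ℝ → ℝ) : Prop :=
  StrictMonoOn h (Set.Ici 0) ∧ ContinuousOn h (Set.Ici 0) ∧ h 0 = 0 ∧
  Tendsto (fun ε => h ε / ε) (nhdsWithin 0 (Set.Ioi 0)) (nhds 0) ∧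
  (∀ a b : ℝ, 0 ≤ a → 0 ≤ b → h a + h b ≤ h (a + b)) ∧
  Tendsto h atTop atTop

/-- `Γ_{ε,δ}(ν,η) ≠ ∅`: existence of a countable mass-transport decomposition. -/
def GammaDecomp (μ : Measure X) (ε δ : ℝ) (ν η : Measure X) : Prop :=
  ∃ νi ηi : ℕ → Measure X,
    (∀ i, νi i ∈ MM μ) ∧ (∀ i, ηi i ∈ MM μ) ∧
    ν = Measure.sum νi ∧ η = Measure.sum ηi ∧
    (∃ S : ℝ, HasSum (fun i => |mass (νi i) - mass (ηi i)|) S ∧ S ≤ δ) ∧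
    (∀ i, Metric.diam (msupp (νi i) ∪ msupp (ηi i)) ≤ ε)

/-- The mass transport metric `d_𝓜`. -/
noncomputable def dM (h : ℝ → ℝ) (μ : Measure X) (ν η : Measure X) : ℝ :=
  sInf {ε : ℝ | 0 < ε ∧ GammaDecomp μ ε (h ε) ν η}

/-- A rectifiable curve in `𝓜` subparametrized by arc-length: a `1`-Lipschitz map
`[0,b] → (𝓜, d_𝓜)`. -/
def IsCurveM (h : ℝ → ℝ) (μ : Measure X) (b : ℝ) (γ : ℝ → Measure X) : Prop :=
  0 ≤ b ∧ (∀ t ∈ Icc (0:ℝ) b, γ t ∈ MM μ) ∧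
  ∀ s ∈ Icc (0:ℝ) b, ∀ t ∈ Icc (0:ℝ) b, dM h μ (γ s) (γ t) ≤ |s - t|

/-- A rectifiable curve in `𝓧 = 𝓜 \ {0}` subparametrized by arc-length. -/
def IsCurveX (h : ℝ → ℝ) (μ : Measure X) (b : ℝ) (γ : ℝ → Measure X) : Prop :=
  IsCurveM h μ b γ ∧ ∀ t ∈ Icc (0:ℝ) b, γ t ≠ 0

/-- The mean value functional `F_f(η) = (1/‖η‖) ∫ f dη`. -/
noncomputable def FfM (f : X → ℝ) (η : Measure X) : ℝ := (∫ x, f x ∂η) / mass η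

/-- `r_F^ε(η)`. -/
noncomputable def rGradE (h : ℝ → ℝ) (μ : Measure X) (F : Measure X → ℝ) (ε : ℝ)
    (η : Measure X) : ℝ≥0∞ :=
  sSup {r : ℝ≥0∞ | ∃ (b : ℝ) (γ : ℝ → Measure X) (s : ℝ),
    IsCurveX h μ b γ ∧ γ 0 = η ∧ 0 < s ∧ s < ε ∧ s < b ∧
    r = ENNReal.ofReal (|F (γ s) - F η| / s)}

/-- The upper gradient `r_F(η) = lim_{ε→0} r_F^ε(η)`. -/
noncomputable def rGrad (h : ℝ → ℝ) (μ : Measure X) (F : Measure X → ℝ)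
    (η : Measure X) : ℝ≥0∞ :=
  ⨅ (ε : ℝ) (_ : 0 < ε), rGradE h μ F ε η

/-- Upper semicontinuous regularization along curves of `g : 𝓧 → [0,∞]`. -/
noncomputable def breveG (h : ℝ → ℝ) (μ : Measure X) (g : Measure X → ℝ≥0∞)
    (η : Measure X) : ℝ≥0∞ :=
  ⨅ (s : ℝ) (_ : 0 < s), sSup {r : ℝ≥0∞ | ∃ (b : ℝ) (γ : ℝ → Measure X) (t : ℝ),
    IsCurveX h μ b γ ∧ γ 0 = η ∧ 0 ≤ t ∧ t < s ∧ t ≤ b ∧ r = g (γ t)}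

/-- `sup { Σᵢ G(ηᵢ)^p ‖ηᵢ‖ }` over finite disjointly supported families in `𝓧`. -/
noncomputable def LpPow (μ : Measure X) (p : ℝ) (G : Measure X → ℝ≥0∞) : ℝ≥0∞ :=
  sSup {r : ℝ≥0∞ | ∃ (k : ℕ) (η : Fin k → Measure X),
    (∀ i, η i ∈ MM μ ∧ η i ≠ 0) ∧
    (∀ i j, i ≠ j → Disjoint (msupp (η i)) (msupp (η j))) ∧
    r = ∑ i, (G (η i)) ^ p * (η i) Set.univ}

/-- The `𝓛^p(𝓧)` norm of `F : 𝓧 → ℝ`. -/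
noncomputable def LpNorm (μ : Measure X) (p : ℝ) (F : Measure X → ℝ) : ℝ≥0∞ :=
  (LpPow μ p (fun η => ENNReal.ofReal |F η|)) ^ (1 / p)

/-- The `𝓛^p(𝓧)` norm for an extended exponent `p ∈ [1,∞]`. -/
noncomputable def LpNormE (μ : Measure X) (p : ℝ≥0∞) (F : Measure X → ℝ) : ℝ≥0∞ :=
  if p = ∞ then ⨆ (η : Measure X) (_ : η ∈ MM μ ∧ η ≠ 0), ENNReal.ofReal |F η|
  else LpNorm μ p.toReal F


/-!
Two decompositions of the same middle measure `η` admit a common refinement, obtained by multiplying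
the pieces of one with the Radon–Nikodym densities of the pieces of the other. Splitting the outer
measures in proportion to the refined masses leaves the total mass defect unchanged, and two refined
pieces with a nonzero middle share a support point, so their diameters add; superadditivity of `h`
absorbs the sum of the two defects, which gives the triangle inequality.

A decomposition at scale `ε` with mass defect `h ε` bounds the Lévy–Prokhorov distance by
`max ε (h ε)`. A positive superadditive `h` tends to `0` at `0⁺`, so `d_𝓜 ν η = 0` forces `ν = η`.
It also tends to `∞`, so any two measures of `𝓜` are related by the trivial one-piece decomposition
at a large enough scale.
-/

lemma exists_sum_eq_and_sum_eq_of_sum_eq_sum {Ω ι κ : Type*} [MeasurableSpace Ω] [Countable κ]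
    (f : ι → Measure Ω) (g : κ → Measure Ω) [SigmaFinite (Measure.sum f)]
    (hfg : Measure.sum f = Measure.sum g) :
    ∃ m : ι → κ → Measure Ω,
      (∀ i, Measure.sum (m i) = f i) ∧ ∀ j, Measure.sum (fun i => m i j) = g j := by
  set η := Measure.sum f with hη
  have hg_le (j : κ) : g j ≤ η := hfg ▸ Measure.le_sum g j
  have (j : κ) : SigmaFinite (g j) := Measure.sigmaFinite_of_le η (hg_le j)
  let u : κ → Ω → ℝ≥0∞ := fun j => (g j).rnDeriv η
  have hu_meas (j : κ) : Measurable (u j) := Measure.measurable_rnDeriv _ _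
  have hu (j : κ) : η.withDensity (u j) = g j :=
    Measure.withDensity_rnDeriv_eq _ _ (Measure.absolutelyContinuous_of_le (hg_le j))
  have hu_sum : ∑' j, u j =ᵐ[η] 1 := by
    rw [← withDensity_eq_iff_of_sigmaFinite (by fun_prop) (by fun_prop), withDensity_one,
      withDensity_tsum hu_meas, hfg]
    simp only [← hfg, hu]
  refine ⟨fun i j => (f i).withDensity (u j), fun i => ?_, fun j => ?_⟩
  · have hfi : f i ≪ η := Measure.absolutelyContinuous_of_le (Measure.le_sum f i)
    rw [← withDensity_tsum hu_meas, withDensity_congr_ae (hfi.ae_le hu_sum), withDensity_one]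
  · rw [← withDensity_sum, ← hη, hu]

section Mass

variable {Ω ι : Type*} [MeasurableSpace Ω] [Nonempty ι]

lemma exists_tsum_eq_one_and_mul_tsum_eq (m : ι → ℝ≥0∞) (hm : ∑' i, m i ≠ ∞) :
    ∃ w : ι → ℝ≥0∞, ∑' i, w i = 1 ∧ ∀ i, w i * ∑' j, m j = m i := by
  by_cases h0 : ∑' i, m i = 0
  · obtain ⟨i₀⟩ := ‹Nonempty ι›
    exact ⟨Pi.single i₀ 1, tsum_pi_single i₀ 1, fun i => by simp [h0, ENNReal.tsum_eq_zero.1 h0 i]⟩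
  · refine ⟨fun i => m i / ∑' j, m j, ?_, fun i => ENNReal.div_mul_cancel h0 hm⟩
    simp only [div_eq_mul_inv, ENNReal.tsum_mul_right, ENNReal.mul_inv_cancel h0 hm]

lemma edist_toReal_mul_toReal_mul {w : ℝ≥0∞} (hw : w ≠ ∞) (a b : ℝ) :
    edist (w.toReal * a) (w.toReal * b) = w * edist a b := by
  simp only [← smul_eq_mul, edist_smul₀]
  rw [ENNReal.smul_def, ← enorm_eq_nnnorm, Real.enorm_of_nonneg ENNReal.toReal_nonneg,
    ENNReal.ofReal_toReal hw, smul_eq_mul]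

lemma edist_mass_zero (ν : Measure Ω) [IsFiniteMeasure ν] : edist (mass ν) 0 = ν univ := by
  simp [mass]

lemma measure_univ_le_add_edist_mass (ν η : Measure Ω) [IsFiniteMeasure ν] [IsFiniteMeasure η] :
    ν univ ≤ η univ + edist (mass ν) (mass η) := by
  rw [← edist_mass_zero ν, ← edist_mass_zero η, add_comm]
  exact edist_triangle _ _ _

lemma exists_sum_eq_and_tsum_edist_mass_eq (ν : Measure Ω) (m : ι → Measure Ω)
    [IsFiniteMeasure (Measure.sum m)] :
    ∃ n : ι → Measure Ω, Measure.sum n = ν ∧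
      ∑' i, edist (mass (n i)) (mass (m i)) = edist (mass ν) (mass (Measure.sum m)) := by
  have hm : Measure.sum m univ = ∑' i, m i univ := Measure.sum_apply _ MeasurableSet.univ
  obtain ⟨w, hw_sum, hw⟩ :=
    exists_tsum_eq_one_and_mul_tsum_eq (fun i => m i univ) (hm ▸ measure_ne_top _ _)
  refine ⟨fun i => w i • ν, ?_, ?_⟩
  · ext s hs
    simp [Measure.sum_apply _ hs, ENNReal.tsum_mul_right, hw_sum]
  · have hw_edist (i : ι) : edist (mass (w i • ν)) (mass (m i)) =
        w i * edist (mass ν) (mass (Measure.sum m)) := by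
      have hwi : w i ≠ ∞ := ne_top_of_le_ne_top (by simp) (hw_sum ▸ ENNReal.le_tsum i)
      rw [← edist_toReal_mul_toReal_mul hwi]
      simp [mass, ← hw i, hm]
    simp only [hw_edist, ENNReal.tsum_mul_right, hw_sum, one_mul]

end Mass

lemma msupp_eq_support (ν : Measure X) : msupp ν = ν.support :=
  Set.ext fun _ => Metric.nhds_basis_ball.mem_measureSupport.symm

lemma msupp_mono {ν η : Measure X} (hle : ν ≤ η) : msupp ν ⊆ msupp η := by
  simpa only [msupp_eq_support] using Measure.support_mono hle

lemma isClosed_msupp (ν : Measure X) : IsClosed (msupp ν) :=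
  msupp_eq_support ν ▸ Measure.isClosed_support

lemma msupp_zero : msupp (0 : Measure X) = ∅ := by
  rw [msupp_eq_support, Measure.support_zero]

lemma zero_mem_MM (μ : Measure X) : 0 ∈ MM μ :=
  ⟨Measure.zero_le μ, msupp_zero (X := X) ▸ isCompact_empty⟩

lemma MM.mem_of_le {μ ν η : Measure X} (hη : η ∈ MM μ) (hle : ν ≤ η) : ν ∈ MM μ :=
  ⟨hle.trans hη.1, hη.2.of_isClosed_subset (isClosed_msupp ν) (msupp_mono hle)⟩

lemma measure_msupp [HereditarilyLindelofSpace X] (ν : Measure X) : ν (msupp ν) = ν univ :=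
  measure_of_measure_compl_eq_zero (msupp_eq_support ν ▸ Measure.measure_compl_support)

lemma MM.isFiniteMeasure [HereditarilyLindelofSpace X] {μ ν : Measure X}
    [IsFiniteMeasureOnCompacts μ] (hν : ν ∈ MM μ) : IsFiniteMeasure ν :=
  ⟨measure_msupp ν ▸ (hν.1 _).trans_lt hν.2.measure_lt_top⟩

/-- A single step of a mass transport at scale `ε`: two measures of `𝓜` whose supports lie together
in a set of diameter at most `ε`. -/
structure IsTransportPair (μ : Measure X) (ε : ℝ) (ν η : Measure X) : Prop where
  left_mem : ν ∈ MM μ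
  right_mem : η ∈ MM μ
  diam_le : Metric.diam (msupp ν ∪ msupp η) ≤ ε

namespace IsTransportPair

variable {μ ν η ρ : Measure X} {ε ε₁ ε₂ : ℝ}

lemma nonneg (h : IsTransportPair μ ε ν η) : 0 ≤ ε := Metric.diam_nonneg.trans h.diam_le

lemma isBounded (h : IsTransportPair μ ε ν η) : Bornology.IsBounded (msupp ν ∪ msupp η) :=
  (h.left_mem.2.union h.right_mem.2).isBounded

lemma zero (μ : Measure X) (hε : 0 ≤ ε) : IsTransportPair μ ε 0 0 :=
  ⟨zero_mem_MM μ, zero_mem_MM μ, by simpa [msupp_zero] using hε⟩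

lemma symm (h : IsTransportPair μ ε ν η) : IsTransportPair μ ε η ν :=
  ⟨h.right_mem, h.left_mem, union_comm (msupp ν) _ ▸ h.diam_le⟩

lemma mono {ν' η' : Measure X} (h : IsTransportPair μ ε₁ ν η) (hν : ν' ≤ ν) (hη : η' ≤ η)
    (hε : ε₁ ≤ ε₂) : IsTransportPair μ ε₂ ν' η' where
  left_mem := MM.mem_of_le h.left_mem hν
  right_mem := MM.mem_of_le h.right_mem hη
  diam_le := (Metric.diam_mono (union_subset_union (msupp_mono hν) (msupp_mono hη))
    h.isBounded).trans (h.diam_le.trans hε)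

lemma trans [HereditarilyLindelofSpace X] (h₁ : IsTransportPair μ ε₁ ν η)
    (h₂ : IsTransportPair μ ε₂ η ρ) (hη : η ≠ 0) : IsTransportPair μ (ε₁ + ε₂) ν ρ where
  left_mem := h₁.left_mem
  right_mem := h₂.right_mem
  diam_le := by
    obtain ⟨x, hx⟩ : (msupp η).Nonempty := msupp_eq_support η ▸ Measure.nonempty_support hη
    calc Metric.diam (msupp ν ∪ msupp ρ)
        ≤ Metric.diam ((msupp ν ∪ msupp η) ∪ (msupp η ∪ msupp ρ)) :=
          Metric.diam_mono (union_subset_union subset_union_left subset_union_right)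
            (h₁.isBounded.union h₂.isBounded)
      _ ≤ Metric.diam (msupp ν ∪ msupp η) + Metric.diam (msupp η ∪ msupp ρ) :=
          Metric.diam_union' ⟨x, .inr hx, .inl hx⟩
      _ ≤ ε₁ + ε₂ := add_le_add h₁.diam_le h₂.diam_le

lemma measure_le [HereditarilyLindelofSpace X] [IsFiniteMeasureOnCompacts μ]
    (h : IsTransportPair μ ε ν η) (B : Set X) :
    ν B ≤ η (Metric.cthickening ε B) + edist (mass ν) (mass η) := by
  have := MM.isFiniteMeasure h.left_mem
  have := MM.isFiniteMeasure h.right_mem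
  rcases eq_zero_or_pos (ν B) with hB | hB
  · simp [hB]
  obtain ⟨x, hxB, hxν⟩ := Measure.nonempty_inter_support_of_pos hB
  have hη_subset : msupp η ⊆ Metric.cthickening ε B := fun y hy =>
    Metric.mem_cthickening_of_dist_le y x ε B hxB <|
      (Metric.dist_le_diam_of_mem h.isBounded (.inr hy)
        (.inl (msupp_eq_support ν ▸ hxν))).trans h.diam_le
  calc ν B ≤ ν univ := measure_mono (subset_univ B)
    _ ≤ η univ + edist (mass ν) (mass η) := measure_univ_le_add_edist_mass ν η
    _ = η (msupp η) + edist (mass ν) (mass η) := by rw [measure_msupp]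
    _ ≤ η (Metric.cthickening ε B) + edist (mass ν) (mass η) := by gcongr

end IsTransportPair

/-- The condition `Γ_{ε,c}(ν,η) ≠ ∅` for an extended nonnegative bound `c` on the mass defect, which
makes the relation stable under countable sums. -/
def TransportDecomp (μ : Measure X) (ε : ℝ) (c : ℝ≥0∞) (ν η : Measure X) : Prop :=
  ∃ νi ηi : ℕ → Measure X, (∀ i, IsTransportPair μ ε (νi i) (ηi i)) ∧
    Measure.sum νi = ν ∧ Measure.sum ηi = η ∧ ∑' i, edist (mass (νi i)) (mass (ηi i)) ≤ c

lemma exists_hasSum_le_iff_tsum_ofReal_le {ι : Type*} {f : ι → ℝ} (hf : ∀ i, 0 ≤ f i) {δ : ℝ}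
    (hδ : 0 ≤ δ) :
    (∃ S, HasSum f S ∧ S ≤ δ) ↔ ∑' i, ENNReal.ofReal (f i) ≤ ENNReal.ofReal δ := by
  constructor
  · rintro ⟨S, hS, hSδ⟩
    rw [← ENNReal.ofReal_tsum_of_nonneg hf hS.summable, hS.tsum_eq]
    exact ENNReal.ofReal_le_ofReal hSδ
  · intro hle
    have hsum : Summable f := by
      simpa only [ENNReal.toReal_ofReal (hf _)] using
        ENNReal.summable_toReal (ne_top_of_le_ne_top ENNReal.ofReal_ne_top hle)
    rw [← ENNReal.ofReal_tsum_of_nonneg hf hsum, ENNReal.ofReal_le_ofReal_iff hδ] at hle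
    exact ⟨_, hsum.hasSum, hle⟩

lemma gammaDecomp_iff_transportDecomp {μ ν η : Measure X} {ε δ : ℝ} (hδ : 0 ≤ δ) :
    GammaDecomp μ ε δ ν η ↔ TransportDecomp μ ε (ENNReal.ofReal δ) ν η := by
  simp only [GammaDecomp, TransportDecomp, edist_dist, Real.dist_eq,
    exists_hasSum_le_iff_tsum_ofReal_le (fun _ => abs_nonneg _) hδ]
  refine exists₂_congr fun νi ηi => ⟨?_, ?_⟩
  · rintro ⟨hνi, hηi, hν, hη, hc, hd⟩
    exact ⟨fun i => ⟨hνi i, hηi i, hd i⟩, hν.symm, hη.symm, hc⟩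
  · rintro ⟨hp, hν, hη, hc⟩
    exact ⟨fun i => (hp i).left_mem, fun i => (hp i).right_mem, hν.symm, hη.symm, hc,
      fun i => (hp i).diam_le⟩

namespace TransportDecomp

variable {μ ν η ρ : Measure X} {ε ε₁ ε₂ : ℝ} {c c₁ c₂ : ℝ≥0∞}

lemma nonneg (h : TransportDecomp μ ε c ν η) : 0 ≤ ε :=
  let ⟨_, _, hp, _⟩ := h
  (hp 0).nonneg

lemma mono_cost (h : TransportDecomp μ ε c₁ ν η) (hc : c₁ ≤ c₂) : TransportDecomp μ ε c₂ ν η :=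
  let ⟨νi, ηi, hp, hν, hη, hle⟩ := h
  ⟨νi, ηi, hp, hν, hη, hle.trans hc⟩

lemma symm (h : TransportDecomp μ ε c ν η) : TransportDecomp μ ε c η ν :=
  let ⟨νi, ηi, hp, hν, hη, hle⟩ := h
  ⟨ηi, νi, fun i => (hp i).symm, hη, hν, by simpa only [edist_comm] using hle⟩

lemma of_countable {ι : Type*} [Countable ι] (hε : 0 ≤ ε) {νi ηi : ι → Measure X}
    (hp : ∀ i, IsTransportPair μ ε (νi i) (ηi i)) :
    TransportDecomp μ ε (∑' i, edist (mass (νi i)) (mass (ηi i)))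
      (Measure.sum νi) (Measure.sum ηi) := by
  obtain ⟨e, he⟩ := exists_injective_nat ι
  refine ⟨Function.extend e νi 0, Function.extend e ηi 0, fun n => ?_,
    Measure.sum_extend_zero he νi, Measure.sum_extend_zero he ηi, le_of_eq ?_⟩
  · by_cases hn : ∃ i, e i = n
    · obtain ⟨i, rfl⟩ := hn
      simpa only [he.extend_apply] using hp i
    · simpa only [Function.extend_apply' _ _ _ hn, Pi.zero_apply] using IsTransportPair.zero μ hε
  · rw [← tsum_extend_zero he]
    refine tsum_congr fun n => ?_
    by_cases hn : ∃ i, e i = n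
    · obtain ⟨i, rfl⟩ := hn
      simp only [he.extend_apply]
    · simp [Function.extend_apply' _ _ _ hn]

lemma of_pair (h : IsTransportPair μ ε ν η) :
    TransportDecomp μ ε (edist (mass ν) (mass η)) ν η := by
  simpa using of_countable (ι := Unit) h.nonneg fun _ => h

lemma sum {ι : Type*} [Countable ι] (hε : 0 ≤ ε) {νi ηi : ι → Measure X} {ci : ι → ℝ≥0∞}
    (h : ∀ i, TransportDecomp μ ε (ci i) (νi i) (ηi i)) :
    TransportDecomp μ ε (∑' i, ci i) (Measure.sum νi) (Measure.sum ηi) := by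
  choose ν' η' hp hν hη hc using h
  have hdecomp := of_countable (νi := fun q : ι × ℕ => ν' q.1 q.2) (ηi := fun q => η' q.1 q.2) hε
    fun q => hp q.1 q.2
  simp only [← Measure.sum_sum, hν, hη, ENNReal.tsum_prod'] at hdecomp
  exact hdecomp.mono_cost (ENNReal.tsum_le_tsum hc)

lemma add {ν' η' : Measure X} (h₁ : TransportDecomp μ ε c₁ ν η)
    (h₂ : TransportDecomp μ ε c₂ ν' η') : TransportDecomp μ ε (c₁ + c₂) (ν + ν') (η + η') := by
  simpa [Measure.sum_bool, tsum_bool, add_comm] using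
    sum (νi := (bif · then ν else ν')) (ηi := (bif · then η else η'))
      (ci := (bif · then c₁ else c₂)) h₁.nonneg (Bool.rec h₂ h₁)

lemma of_pair_trans_pair [HereditarilyLindelofSpace X] (h₁ : IsTransportPair μ ε₁ ν η)
    (h₂ : IsTransportPair μ ε₂ η ρ) :
    TransportDecomp μ (ε₁ + ε₂) (edist (mass ν) (mass η) + edist (mass η) (mass ρ)) ν ρ := by
  rcases eq_or_ne η 0 with rfl | hη
  -- Without a common point of the supports, the two measures are transported to `0` separately.
  · have h₁' := h₁.mono le_rfl le_rfl (le_add_of_nonneg_right h₂.nonneg)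
    have h₂' := h₂.mono le_rfl le_rfl (le_add_of_nonneg_left h₁.nonneg)
    simpa using (of_pair h₁').add (of_pair h₂')
  · exact (of_pair (h₁.trans h₂ hη)).mono_cost (edist_triangle _ _ _)

lemma trans [HereditarilyLindelofSpace X] [IsFiniteMeasureOnCompacts μ] [SigmaFinite η]
    (h₁ : TransportDecomp μ ε₁ c₁ ν η) (h₂ : TransportDecomp μ ε₂ c₂ η ρ) :
    TransportDecomp μ (ε₁ + ε₂) (c₁ + c₂) ν ρ := by
  have hε : 0 ≤ ε₁ + ε₂ := add_nonneg h₁.nonneg h₂.nonneg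
  obtain ⟨n, f, hnf, rfl, rfl, hc₁⟩ := h₁
  obtain ⟨g, r, hgr, hgf, rfl, hc₂⟩ := h₂
  obtain ⟨m, hmf, hmg⟩ := exists_sum_eq_and_sum_eq_of_sum_eq_sum f g hgf.symm
  have hf_fin (i : ℕ) : IsFiniteMeasure (Measure.sum (m i)) :=
    hmf i ▸ MM.isFiniteMeasure (hnf i).right_mem
  have hg_fin (j : ℕ) : IsFiniteMeasure (Measure.sum fun i => m i j) :=
    hmg j ▸ MM.isFiniteMeasure (hgr j).left_mem
  choose n' hn' hn'_cost using fun i => exists_sum_eq_and_tsum_edist_mass_eq (n i) (m i)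
  choose r' hr' hr'_cost using fun j => exists_sum_eq_and_tsum_edist_mass_eq (r j) fun i => m i j
  have hpiece (i j : ℕ) : TransportDecomp μ (ε₁ + ε₂)
      (edist (mass (n' i j)) (mass (m i j)) + edist (mass (m i j)) (mass (r' j i)))
      (n' i j) (r' j i) :=
    of_pair_trans_pair
      ((hnf i).mono (hn' i ▸ Measure.le_sum _ j) (hmf i ▸ Measure.le_sum _ j) le_rfl)
      ((hgr j).mono (hmg j ▸ Measure.le_sum (fun i => m i j) i) (hr' j ▸ Measure.le_sum _ i) le_rfl)
  have hsum := sum hε fun i => sum hε (hpiece i)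
  simp only [ENNReal.tsum_add] at hsum
  rw [ENNReal.tsum_comm (f := fun i j => edist (mass (m i j)) (mass (r' j i))),
    Measure.sum_comm fun i j => r' j i] at hsum
  simp only [edist_comm (mass (m _ _)) (mass (r' _ _)), hn', hr', hn'_cost, hr'_cost, hmf, hmg]
    at hsum
  refine hsum.mono_cost (add_le_add hc₁ ?_)
  simpa only [edist_comm] using hc₂

lemma self [OpensMeasurableSpace X] [TopologicalSpace.SeparableSpace X] (hν : ν ∈ MM μ)
    (hε : 0 < ε) : TransportDecomp μ ε 0 ν ν := by
  obtain ⟨A, hA_meas, hA_bdd, hA_diam, hA_univ, hA_disj⟩ :=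
    SeparableSpace.exists_measurable_partition_diam_le X hε
  have hpair (n : ℕ) : IsTransportPair μ ε (ν.restrict (A n)) (ν.restrict (A n)) := by
    have hmem := MM.mem_of_le hν (Measure.restrict_le_self (s := A n))
    refine ⟨hmem, hmem, ?_⟩
    calc Metric.diam (msupp (ν.restrict (A n)) ∪ msupp (ν.restrict (A n)))
        ≤ Metric.diam (closure (A n)) := by
          rw [union_self, msupp_eq_support]
          exact Metric.diam_mono (Measure.support_restrict_subset.trans inter_subset_left)
            (hA_bdd n).closure
      _ ≤ ε := by rw [Metric.diam_closure]; exact hA_diam n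
  have hsum : Measure.sum (fun n => ν.restrict (A n)) = ν := by
    rw [← Measure.restrict_iUnion hA_disj hA_meas, hA_univ, Measure.restrict_univ]
  simpa [hsum] using of_countable hε.le hpair

lemma measure_le [OpensMeasurableSpace X] [HereditarilyLindelofSpace X]
    [IsFiniteMeasureOnCompacts μ] (h : TransportDecomp μ ε c ν η) (B : Set X) :
    ν B ≤ η (Metric.cthickening ε B) + c := by
  obtain ⟨νi, ηi, hp, rfl, rfl, hc⟩ := h
  simp only [Measure.sum_apply_of_countable]
  calc ∑' i, νi i B
      ≤ ∑' i, (ηi i (Metric.cthickening ε B) + edist (mass (νi i)) (mass (ηi i))) :=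
        ENNReal.tsum_le_tsum fun i => (hp i).measure_le B
    _ = ∑' i, ηi i (Metric.cthickening ε B) + ∑' i, edist (mass (νi i)) (mass (ηi i)) :=
        ENNReal.tsum_add
    _ ≤ ∑' i, ηi i (Metric.cthickening ε B) + c := by gcongr

lemma levyProkhorovEDist_le [OpensMeasurableSpace X] [HereditarilyLindelofSpace X]
    [IsFiniteMeasureOnCompacts μ] (h : TransportDecomp μ ε c ν η) :
    levyProkhorovEDist ν η ≤ max (ENNReal.ofReal ε) c := by
  have hthickening {ν η : Measure X} (h : TransportDecomp μ ε c ν η) {δ : ℝ≥0∞}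
      (hδ : max (ENNReal.ofReal ε) c < δ) (hδ_top : δ < ∞) (B : Set X) :
      ν B ≤ η (Metric.thickening δ.toReal B) + δ := by
    have hεδ : ε < δ.toReal :=
      (ENNReal.ofReal_lt_iff_lt_toReal h.nonneg hδ_top.ne).1 ((le_max_left _ _).trans_lt hδ)
    calc ν B ≤ η (Metric.cthickening ε B) + c := h.measure_le B
      _ ≤ η (Metric.thickening δ.toReal B) + δ := by
        gcongr
        · exact Metric.cthickening_subset_thickening' (h.nonneg.trans_lt hεδ) hεδ B
        · exact (le_max_right _ _).trans hδ.le
  exact levyProkhorovEDist_le_of_forall _ _ _ fun δ B hδ hδ_top _ =>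
    ⟨hthickening h hδ hδ_top B, hthickening h.symm hδ hδ_top B⟩

end TransportDecomp

lemma eq_of_levyProkhorovEDist_eq_zero {Ω : Type*} [PseudoMetricSpace Ω] [MeasurableSpace Ω]
    [BorelSpace Ω] {ν η : Measure Ω} [IsFiniteMeasure ν] [IsFiniteMeasure η]
    (h : levyProkhorovEDist ν η = 0) : ν = η := by
  have hclosed (F : Set Ω) (hF : IsClosed F) : ν F = η F :=
    measure_eq_measure_of_levyProkhorovEDist_eq_zero_of_isClosed h hF
      ⟨1, one_pos, measure_ne_top _ _⟩ ⟨1, one_pos, measure_ne_top _ _⟩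
  exact ext_of_generate_finite _ (BorelSpace.measurable_eq.trans borel_eq_generateFrom_isClosed)
    isPiSystem_isClosed hclosed (hclosed univ isClosed_univ)

lemma dM_nonneg (h : ℝ → ℝ) (μ ν η : Measure X) : 0 ≤ dM h μ ν η :=
  Real.sInf_nonneg fun _ hε => hε.1.le

lemma GammaDecomp.symm {μ ν η : Measure X} {ε δ : ℝ} (h : GammaDecomp μ ε δ ν η) :
    GammaDecomp μ ε δ η ν :=
  let ⟨νi, ηi, hνi, hηi, hν, hη, hmass, hdiam⟩ := h
  ⟨ηi, νi, hηi, hνi, hη, hν, by simpa only [abs_sub_comm] using hmass,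
    by simpa only [union_comm] using hdiam⟩

lemma dM_comm (h : ℝ → ℝ) (μ ν η : Measure X) : dM h μ ν η = dM h μ η ν := by
  simp only [dM, show ∀ ε δ, GammaDecomp μ ε δ ν η ↔ GammaDecomp μ ε δ η ν from
    fun _ _ => ⟨GammaDecomp.symm, GammaDecomp.symm⟩]

lemma dM_le_of_transportDecomp {h : ℝ → ℝ} {μ ν η : Measure X} {ε : ℝ} (hε : 0 < ε)
    (hhε : 0 ≤ h ε) (hdecomp : TransportDecomp μ ε (ENNReal.ofReal (h ε)) ν η) :
    dM h μ ν η ≤ ε :=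
  csInf_le ⟨0, fun _ hε' => hε'.1.le⟩ ⟨hε, (gammaDecomp_iff_transportDecomp hhε).2 hdecomp⟩

lemma dM_self [OpensMeasurableSpace X] [TopologicalSpace.SeparableSpace X] {h : ℝ → ℝ}
    {μ ν : Measure X} (hh : ∀ ε, 0 < ε → 0 ≤ h ε) (hν : ν ∈ MM μ) : dM h μ ν ν = 0 := by
  refine le_antisymm (le_of_forall_pos_le_add fun ε hε => ?_) (dM_nonneg h μ ν ν)
  rw [zero_add]
  exact dM_le_of_transportDecomp hε (hh ε hε) ((TransportDecomp.self hν hε).mono_cost zero_le)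

/-- The gauges for which `d_𝓜` is studied: positive superadditive functions on `(0, ∞)`. Values of
`h` elsewhere are left free, since `dM` evaluates `h` at positive scales only. -/
structure IsSuperadditiveGauge (h : ℝ → ℝ) : Prop where
  pos {ε : ℝ} : 0 < ε → 0 < h ε
  add_le {a b : ℝ} : 0 < a → 0 < b → h a + h b ≤ h (a + b)

lemma IsGauge.isSuperadditiveGauge {h : ℝ → ℝ} (hh : IsGauge h) : IsSuperadditiveGauge h := by
  obtain ⟨hmono, -, h_zero, -, hadd, -⟩ := hh
  exact ⟨fun hε => h_zero ▸ hmono self_mem_Ici hε.le hε, fun ha hb => hadd _ _ ha.le hb.le⟩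

namespace IsSuperadditiveGauge

variable {h : ℝ → ℝ}

lemma monotoneOn (hh : IsSuperadditiveGauge h) : MonotoneOn h (Ioi 0) := by
  intro a ha b _ hab
  rcases hab.eq_or_lt with rfl | hlt
  · rfl
  · have hba := sub_pos.2 hlt
    simpa using (le_add_of_nonneg_right (hh.pos hba).le).trans (hh.add_le ha hba)

lemma nat_mul_le (hh : IsSuperadditiveGauge h) {n : ℕ} (hn : 1 ≤ n) {a : ℝ} (ha : 0 < a) :
    n * h a ≤ h (n * a) := by
  induction n, hn using Nat.le_induction with
  | base => simp
  | succ n hn ih =>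
    have hna : 0 < n * a := by positivity
    push_cast
    rw [add_one_mul, add_one_mul]
    exact (by gcongr : n * h a + h a ≤ h (n * a) + h a).trans (hh.add_le hna ha)

lemma tendsto_atTop (hh : IsSuperadditiveGauge h) : Tendsto h atTop atTop := by
  have hfloor : Tendsto (fun x : ℝ => ⌊x⌋₊ * h 1) atTop atTop :=
    (tendsto_natCast_atTop_atTop.comp tendsto_nat_floor_atTop).atTop_mul_const (hh.pos one_pos)
  refine tendsto_atTop_mono' _ ?_ hfloor
  filter_upwards [eventually_ge_atTop 1] with x hx
  have hn : 1 ≤ ⌊x⌋₊ := (Nat.one_le_floor_iff x).2 hx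
  calc ⌊x⌋₊ * h 1 ≤ h (⌊x⌋₊ * 1) := hh.nat_mul_le hn one_pos
    _ ≤ h x := hh.monotoneOn (mem_Ioi.2 (by positivity)) (mem_Ioi.2 (by positivity))
      (by simpa using Nat.floor_le (zero_le_one.trans hx))

lemma tendsto_nhdsGT_zero (hh : IsSuperadditiveGauge h) :
    Tendsto h (nhdsWithin 0 (Ioi 0)) (nhds 0) := by
  have hfloor : Tendsto (fun x : ℝ => h 1 / ⌊x⁻¹⌋₊) (nhdsWithin 0 (Ioi 0)) (nhds 0) :=
    tendsto_const_nhds.div_atTop <| tendsto_natCast_atTop_atTop.comp <|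
      tendsto_nat_floor_atTop.comp tendsto_inv_nhdsGT_zero
  refine squeeze_zero' ?_ ?_ hfloor
  · filter_upwards [self_mem_nhdsWithin] with x hx using (hh.pos hx).le
  · filter_upwards [Ioc_mem_nhdsGT one_pos] with x hx
    obtain ⟨hx_pos, hx_le⟩ := hx
    have hn : 1 ≤ ⌊x⁻¹⌋₊ := (Nat.one_le_floor_iff _).2 ((one_le_inv₀ hx_pos).2 hx_le)
    rw [le_div_iff₀' (by positivity)]
    calc ⌊x⁻¹⌋₊ * h x ≤ h (⌊x⁻¹⌋₊ * x) := hh.nat_mul_le hn hx_pos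
      _ ≤ h 1 := hh.monotoneOn (mem_Ioi.2 (by positivity)) (mem_Ioi.2 one_pos) <|
        (le_div_iff₀ hx_pos).1 (by simpa using Nat.floor_le (inv_nonneg.2 hx_pos.le))

variable {μ ν η ρ : Measure X}

lemma exists_transportDecomp (hh : IsSuperadditiveGauge h) (hν : ν ∈ MM μ) (hη : η ∈ MM μ) :
    ∃ ε, 0 < ε ∧ TransportDecomp μ ε (ENNReal.ofReal (h ε)) ν η := by
  obtain ⟨ε, hdiam, hcost, hε⟩ := ((eventually_ge_atTop (Metric.diam (msupp ν ∪ msupp η))).and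
    ((hh.tendsto_atTop.eventually_ge_atTop (dist (mass ν) (mass η))).and
      (eventually_gt_atTop 0))).exists
  refine ⟨ε, hε, (TransportDecomp.of_pair ⟨hν, hη, hdiam⟩).mono_cost ?_⟩
  rw [edist_dist]
  exact ENNReal.ofReal_le_ofReal hcost

lemma exists_transportDecomp_of_dM_lt (hh : IsSuperadditiveGauge h) (hν : ν ∈ MM μ)
    (hη : η ∈ MM μ) {t : ℝ} (ht : dM h μ ν η < t) :
    ∃ ε, 0 < ε ∧ ε < t ∧ TransportDecomp μ ε (ENNReal.ofReal (h ε)) ν η := by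
  obtain ⟨ε₀, hε₀, hdecomp₀⟩ := hh.exists_transportDecomp hν hη
  have hne : {ε | 0 < ε ∧ GammaDecomp μ ε (h ε) ν η}.Nonempty :=
    ⟨ε₀, hε₀, (gammaDecomp_iff_transportDecomp (hh.pos hε₀).le).2 hdecomp₀⟩
  obtain ⟨ε, ⟨hε, hdecomp⟩, hεt⟩ := exists_lt_of_csInf_lt hne ht
  exact ⟨ε, hε, hεt, (gammaDecomp_iff_transportDecomp (hh.pos hε).le).1 hdecomp⟩

lemma eq_of_dM_eq_zero (hh : IsSuperadditiveGauge h) [BorelSpace X] [HereditarilyLindelofSpace X]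
    [IsFiniteMeasureOnCompacts μ] (hν : ν ∈ MM μ) (hη : η ∈ MM μ) (hdist : dM h μ ν η = 0) :
    ν = η := by
  have := MM.isFiniteMeasure hν
  have := MM.isFiniteMeasure hη
  refine eq_of_levyProkhorovEDist_eq_zero (le_antisymm ?_ zero_le)
  refine ENNReal.le_of_forall_pos_le_add fun t ht _ => ?_
  obtain ⟨s, hst, hs, hst'⟩ := ((hh.tendsto_nhdsGT_zero.eventually_le_const
    (NNReal.coe_pos.2 ht)).and (Ioc_mem_nhdsGT (NNReal.coe_pos.2 ht))).exists
  obtain ⟨ε, hε, hεs, hdecomp⟩ := hh.exists_transportDecomp_of_dM_lt hν hη (hdist.trans_lt hs)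
  have hhε : h ε ≤ t := (hh.monotoneOn hε hs hεs.le).trans hst
  calc levyProkhorovEDist ν η ≤ max (ENNReal.ofReal ε) (ENNReal.ofReal (h ε)) :=
        hdecomp.levyProkhorovEDist_le
    _ ≤ 0 + t := by
        rw [zero_add, ← ENNReal.ofReal_coe_nnreal]
        exact max_le (ENNReal.ofReal_le_ofReal (hεs.le.trans hst'))
          (ENNReal.ofReal_le_ofReal hhε)

lemma dM_triangle (hh : IsSuperadditiveGauge h) [HereditarilyLindelofSpace X]
    [IsFiniteMeasureOnCompacts μ] (hν : ν ∈ MM μ) (hη : η ∈ MM μ) (hρ : ρ ∈ MM μ) :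
    dM h μ ν ρ ≤ dM h μ ν η + dM h μ η ρ := by
  have := MM.isFiniteMeasure hη
  refine le_of_forall_pos_lt_add fun t ht => ?_
  obtain ⟨ε₁, hε₁, hlt₁, h₁⟩ :=
    hh.exists_transportDecomp_of_dM_lt hν hη (lt_add_of_pos_right _ (half_pos ht))
  obtain ⟨ε₂, hε₂, hlt₂, h₂⟩ :=
    hh.exists_transportDecomp_of_dM_lt hη hρ (lt_add_of_pos_right _ (half_pos ht))
  have hcost : ENNReal.ofReal (h ε₁) + ENNReal.ofReal (h ε₂) ≤ ENNReal.ofReal (h (ε₁ + ε₂)) := by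
    rw [← ENNReal.ofReal_add (hh.pos hε₁).le (hh.pos hε₂).le]
    exact ENNReal.ofReal_le_ofReal (hh.add_le hε₁ hε₂)
  calc dM h μ ν ρ ≤ ε₁ + ε₂ :=
        dM_le_of_transportDecomp (add_pos hε₁ hε₂) (hh.pos (add_pos hε₁ hε₂)).le
          ((h₁.trans h₂).mono_cost hcost)
    _ < dM h μ ν η + dM h μ η ρ + t := by linarith

end IsSuperadditiveGauge

theorem stmt3_general {X : Type*} [MetricSpace X] [MeasurableSpace X] [BorelSpace X]
    [TopologicalSpace.SeparableSpace X] (μ : Measure X) [IsFiniteMeasureOnCompacts μ]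
    {h : ℝ → ℝ} (hh : IsSuperadditiveGauge h) :
    (∀ ν η : Measure X, 0 ≤ dM h μ ν η) ∧
    (∀ ν ∈ MM μ, dM h μ ν ν = 0) ∧
    (∀ ν ∈ MM μ, ∀ η ∈ MM μ, dM h μ ν η = 0 → ν = η) ∧
    (∀ ν η : Measure X, dM h μ ν η = dM h μ η ν) ∧
    (∀ ν ∈ MM μ, ∀ η ∈ MM μ, ∀ ρ ∈ MM μ, dM h μ ν ρ ≤ dM h μ ν η + dM h μ η ρ) := by
  have := UniformSpace.secondCountable_of_separable X
  exact ⟨dM_nonneg h μ, fun _ => dM_self fun _ hε => (hh.pos hε).le,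
    fun _ hν _ hη => hh.eq_of_dM_eq_zero hν hη, dM_comm h μ,
    fun _ hν _ hη _ hρ => hh.dM_triangle hν hη hρ⟩

/-- `d_𝓜` is a metric on `𝓜`. -/
theorem stmt3 {X : Type*} [MetricSpace X] [MeasurableSpace X] [BorelSpace X]
    [LocallyCompactSpace X] [TopologicalSpace.SeparableSpace X]
    (μ : Measure X) [μ.Regular]
    (hμ : ∀ (x : X) (r : ℝ), 0 < r → 0 < μ (Metric.ball x r) ∧ μ (Metric.ball x r) < ⊤)
    (h : ℝ → ℝ) (hh : IsGauge h) :
    (∀ ν η : Measure X, 0 ≤ dM h μ ν η) ∧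
    (∀ ν ∈ MM μ, dM h μ ν ν = 0) ∧
    (∀ ν ∈ MM μ, ∀ η ∈ MM μ, dM h μ ν η = 0 → ν = η) ∧
    (∀ ν η : Measure X, dM h μ ν η = dM h μ η ν) ∧
    (∀ ν ∈ MM μ, ∀ η ∈ MM μ, ∀ ρ ∈ MM μ, dM h μ ν ρ ≤ dM h μ ν η + dM h μ η ρ) :=
  stmt3_general μ hh.isSuperadditiveGauge
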